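/- Independence for l-entailment: Let K be a consistent statistical ALC knowledge base and (C|D)[ℓ,u] a conditional. Then K ⊨_l (C|D)[ℓ,u] if and only if {κ ∈ K : κ ⇌* (C|D)[ℓ,u]} ⊨_l (C|D)[ℓ,u], where {κ ∈ K : κ ⇌* (C|D)[ℓ,u]} is the restriction of K to the conditionals connected to (C|D)[ℓ,u]. -/

import Mathlib

open scoped Classical

/-- ALC concepts over concept names and role names (both drawn from ℕ,
regarded as disjoint name spaces). -/
inductive Cpt : Type where
  | top : Cpt
  | atom : ℕ → Cpt
  | neg : Cpt → Cpt
  | inter : Cpt → Cpt → Cpt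
  | ex : ℕ → Cpt → Cpt
deriving DecidableEq

/-- A finite interpretation with domain drawn from the type `α`. -/
structure Interp (α : Type) where
  dom : Finset α
  dom_nonempty : dom.Nonempty
  conc : ℕ → Finset α
  conc_sub : ∀ a, conc a ⊆ dom
  role : ℕ → Finset (α × α)
  role_sub : ∀ r, role r ⊆ dom ×ˢ dom

/-- The extension `C^I` of a concept. -/
noncomputable def Interp.ext {α : Type} (I : Interp α) : Cpt → Finset α
  | .top => I.dom
  | .atom a => I.conc a
  | .neg c => I.dom \ I.ext c
  | .inter c d => I.ext c ∩ I.ext d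
  | .ex r c => I.dom.filter (fun d => ∃ e ∈ I.ext c, (d, e) ∈ I.role r)

/-- `[C]^I`, the cardinality of the extension of `C`. -/
noncomputable def cardC {α : Type} (I : Interp α) (c : Cpt) : ℕ := (I.ext c).card

/-- A probabilistic conditional `(C|D)[l,u]`. -/
structure Cond : Type where
  C : Cpt
  D : Cpt
  l : ℚ
  u : ℚ
deriving DecidableEq

/-- `I ⊨ (C|D)[l,u]` iff `[D]^I = 0` or `l ≤ [C ⊓ D]^I/[D]^I ≤ u`. -/
def satCond {α : Type} (I : Interp α) (κ : Cond) : Prop :=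
  cardC I κ.D = 0 ∨
    (κ.l ≤ (cardC I (.inter κ.C κ.D) : ℚ) / (cardC I κ.D : ℚ) ∧
     (cardC I (.inter κ.C κ.D) : ℚ) / (cardC I κ.D : ℚ) ≤ κ.u)

/-- Finite interpretations (with domain drawn from the countable set ℕ). -/
abbrev FInterp := Interp ℕ

/-- The models of a knowledge base (finite set of conditionals). -/
def Models (K : Finset Cond) : Set FInterp := {I | ∀ κ ∈ K, satCond I κ}

/-- l-entailment: every model of `K` satisfies the conditional. -/
def entailsL (K : Finset Cond) (κ : Cond) : Prop := ∀ I ∈ Models K, satCond I κ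

/-- The signature of a concept: its concept names (`Sum.inl`) and role names (`Sum.inr`). -/
def sig : Cpt → Finset (ℕ ⊕ ℕ)
  | .top => ∅
  | .atom a => {Sum.inl a}
  | .neg c => sig c
  | .inter c d => sig c ∪ sig d
  | .ex r c => insert (Sum.inr r) (sig c)

/-- Directly connected: the signatures of the two (qualitative) conditionals overlap. -/
def dconn (p q : Cpt × Cpt) : Prop :=
  ((sig p.1 ∪ sig p.2) ∩ (sig q.1 ∪ sig q.2)).Nonempty

/-- Connected (`⇌*`): transitive closure of `⇌` among the conditionals of the KB
together with the target conditional/query. -/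
def connIn (P : Set (Cpt × Cpt)) : Cpt × Cpt → Cpt × Cpt → Prop :=
  Relation.TransGen (fun p q => dconn p q ∧ p ∈ P ∧ q ∈ P)

/-!
Let `I` be a model of the part of `K` connected to the query and `J` a model of the rest. These two
parts share no names, so `I` and `J` can be glued on the product of their domains: each name of the
connected part is read off the first coordinate, every other name off the second. Both coordinate
projections then have fibres of constant size, hence multiply all relevant cardinalities by a
constant and preserve the ratios that conditionals talk about. The product is thus a model of `K`,
and it agrees with `I` on the query.
-/

theorem card_filter_eq_of_mem {α : Type*} {s : Finset α} {a : α} (ha : a ∈ s) :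
    (s.filter fun x => x = a).card = 1 :=
  Finset.card_eq_one.2 ⟨a, Finset.ext fun x => by
    simpa only [Finset.mem_filter, Finset.mem_singleton, and_iff_right_iff_imp] using
      fun hx => hx ▸ ha⟩

/-- The concept and role names occurring in a conditional. -/
def Cond.signature (κ : Cond) : Finset (ℕ ⊕ ℕ) := sig κ.C ∪ sig κ.D

namespace Interp

variable {α β : Type} {S : Set (ℕ ⊕ ℕ)}

theorem ext_subset_dom (I : Interp α) (c : Cpt) : I.ext c ⊆ I.dom := by
  cases c with
  | top => exact Finset.Subset.rfl
  | atom a => exact I.conc_sub a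
  | neg c => exact Finset.sdiff_subset
  | inter c d => exact Finset.inter_subset_left.trans (I.ext_subset_dom c)
  | ex r c => exact Finset.filter_subset _ _

/-- `M` covers `I` uniformly via `π`: `π` maps the domain of `M` to that of `I` with all fibres of
size `k`, and every concept or role name in `S` is interpreted in `M` by the preimage under `π` of
its interpretation in `I`. Names outside `S` are unconstrained. -/
structure IsUniformCover (S : Set (ℕ ⊕ ℕ)) (M : Interp α) (I : Interp β) (π : α → β) (k : ℕ) :
    Prop where
  map_mem_dom : ∀ x ∈ M.dom, π x ∈ I.dom
  card_fiber : ∀ y ∈ I.dom, (M.dom.filter fun x => π x = y).card = k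
  mem_conc_iff : ∀ a, Sum.inl a ∈ S → ∀ x ∈ M.dom, (x ∈ M.conc a ↔ π x ∈ I.conc a)
  mem_role_iff : ∀ r, Sum.inr r ∈ S → ∀ x ∈ M.dom, ∀ y ∈ M.dom,
    ((x, y) ∈ M.role r ↔ (π x, π y) ∈ I.role r)

namespace IsUniformCover

variable {M : Interp α} {I : Interp β} {π : α → β} {k : ℕ}

theorem pos (h : IsUniformCover S M I π k) : 0 < k := by
  obtain ⟨x, hx⟩ := M.dom_nonempty
  rw [← h.card_fiber (π x) (h.map_mem_dom x hx)]
  exact Finset.card_pos.2 ⟨x, Finset.mem_filter.2 ⟨hx, rfl⟩⟩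

theorem exists_preimage (h : IsUniformCover S M I π k) {y : β} (hy : y ∈ I.dom) :
    ∃ x ∈ M.dom, π x = y := by
  have fiber_pos : 0 < (M.dom.filter fun x => π x = y).card := h.card_fiber y hy ▸ h.pos
  simpa only [Finset.card_pos, Finset.filter_nonempty_iff] using fiber_pos

theorem mem_ext_iff (h : IsUniformCover S M I π k) {c : Cpt} (hc : (sig c : Set (ℕ ⊕ ℕ)) ⊆ S)
    {x : α} (hx : x ∈ M.dom) : x ∈ M.ext c ↔ π x ∈ I.ext c := by
  induction c generalizing x with
  | top => exact iff_of_true hx (h.map_mem_dom x hx)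
  | atom a => exact h.mem_conc_iff a (hc (by simp [sig])) x hx
  | neg c ih => simp only [Interp.ext, Finset.mem_sdiff, hx, h.map_mem_dom x hx, ih hc hx]
  | inter c d ihc ihd =>
    simp only [sig, Finset.coe_union, Set.union_subset_iff] at hc
    simp only [Interp.ext, Finset.mem_inter, ihc hc.1 hx, ihd hc.2 hx]
  | ex r c ih =>
    simp only [sig, Finset.coe_insert, Set.insert_subset_iff] at hc
    simp only [Interp.ext, Finset.mem_filter, hx, h.map_mem_dom x hx, true_and]
    constructor
    · rintro ⟨y, hyc, hxy⟩
      have hy := M.ext_subset_dom c hyc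
      exact ⟨π y, (ih hc.2 hy).1 hyc, (h.mem_role_iff r hc.1 x hx y hy).1 hxy⟩
    · rintro ⟨z, hzc, hxz⟩
      obtain ⟨y, hy, rfl⟩ := h.exists_preimage (I.ext_subset_dom c hzc)
      exact ⟨y, (ih hc.2 hy).2 hzc, (h.mem_role_iff r hc.1 x hx y hy).2 hxz⟩

theorem cardC_eq (h : IsUniformCover S M I π k) {c : Cpt} (hc : (sig c : Set (ℕ ⊕ ℕ)) ⊆ S) :
    cardC M c = cardC I c * k := by
  have maps_ext : ∀ x ∈ M.ext c, π x ∈ I.ext c := fun x hx =>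
    (h.mem_ext_iff hc (M.ext_subset_dom c hx)).1 hx
  have fiber_eq : ∀ y ∈ I.ext c,
      ((M.ext c).filter fun x => π x = y) = M.dom.filter fun x => π x = y := by
    intro y hy
    ext x
    simp only [Finset.mem_filter, and_congr_left_iff]
    rintro rfl
    exact ⟨fun hx => M.ext_subset_dom c hx, fun hx => (h.mem_ext_iff hc hx).2 hy⟩
  calc (M.ext c).card
      = ∑ y ∈ I.ext c, ((M.ext c).filter fun x => π x = y).card :=
        Finset.card_eq_sum_card_fiberwise maps_ext
    _ = (I.ext c).card * k := Finset.sum_const_nat fun y hy => by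
        rw [fiber_eq y hy, h.card_fiber y (I.ext_subset_dom c hy)]

theorem satCond_iff (h : IsUniformCover S M I π k) {κ : Cond}
    (hκ : (κ.signature : Set (ℕ ⊕ ℕ)) ⊆ S) : satCond M κ ↔ satCond I κ := by
  have hD : (sig κ.D : Set (ℕ ⊕ ℕ)) ⊆ S :=
    (Finset.coe_subset.2 Finset.subset_union_right).trans hκ
  have hCD : (sig (.inter κ.C κ.D) : Set (ℕ ⊕ ℕ)) ⊆ S := hκ
  have hk : (k : ℚ) ≠ 0 := Nat.cast_ne_zero.2 h.pos.ne'
  simp only [satCond, h.cardC_eq hD, h.cardC_eq hCD, Nat.cast_mul, mul_div_mul_right _ _ hk,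
    mul_eq_zero, h.pos.ne', or_false]

end IsUniformCover

/-- The image of an interpretation under an embedding of its carrier type. -/
def map (f : α ↪ β) (I : Interp α) : Interp β where
  dom := I.dom.map f
  dom_nonempty := I.dom_nonempty.map
  conc a := (I.conc a).map f
  conc_sub a := Finset.map_subset_map.2 (I.conc_sub a)
  role r := (I.role r).map (f.prodMap f)
  role_sub r := by
    rw [← Finset.prodMap_map_product]
    exact Finset.map_subset_map.2 (I.role_sub r)

theorem isUniformCover_map (f : α ↪ β) (I : Interp α) :
    IsUniformCover Set.univ I (I.map f) f 1 where
  map_mem_dom x hx := Finset.mem_map_of_mem f hx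
  card_fiber y hy := by
    obtain ⟨x, hx, rfl⟩ := Finset.mem_map.1 hy
    simp only [f.injective.eq_iff, card_filter_eq_of_mem hx]
  mem_conc_iff a _ x _ := (Finset.mem_map' f).symm
  mem_role_iff r _ x _ y _ := (Finset.mem_map' (f.prodMap f) (a := (x, y))).symm

theorem satCond_map_iff (f : α ↪ β) (I : Interp α) (κ : Cond) :
    satCond (I.map f) κ ↔ satCond I κ :=
  ((isUniformCover_map f I).satCond_iff (Set.subset_univ _)).symm

/-- The gluing of `I` and `J` along `S`: on the product of the two domains, names in `S` are
interpreted by `I` on first coordinates, all other names by `J` on second coordinates. -/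
noncomputable def glue (S : Set (ℕ ⊕ ℕ)) (I : Interp α) (J : Interp β) : Interp (α × β) where
  dom := I.dom ×ˢ J.dom
  dom_nonempty := I.dom_nonempty.product J.dom_nonempty
  conc a := (I.dom ×ˢ J.dom).filter fun x =>
    if Sum.inl a ∈ S then x.1 ∈ I.conc a else x.2 ∈ J.conc a
  conc_sub _ := Finset.filter_subset _ _
  role r := ((I.dom ×ˢ J.dom) ×ˢ (I.dom ×ˢ J.dom)).filter fun p =>
    if Sum.inr r ∈ S then (p.1.1, p.2.1) ∈ I.role r else (p.1.2, p.2.2) ∈ J.role r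
  role_sub _ := Finset.filter_subset _ _

theorem isUniformCover_glue_fst (S : Set (ℕ ⊕ ℕ)) (I : Interp α) (J : Interp β) :
    IsUniformCover S (glue S I J) I Prod.fst J.dom.card where
  map_mem_dom _ hx := (Finset.mem_product.1 hx).1
  card_fiber y hy := by
    simp only [glue, Finset.filter_product_left (· = y), Finset.card_product,
      card_filter_eq_of_mem hy, one_mul]
  mem_conc_iff a ha x hx := by
    simp only [glue, Finset.mem_filter, if_pos ha, and_iff_right_iff_imp]
    exact fun _ => hx
  mem_role_iff r hr x hx y hy := by
    simp only [glue, Finset.mem_filter, if_pos hr, and_iff_right_iff_imp]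
    exact fun _ => Finset.mk_mem_product hx hy

theorem isUniformCover_glue_snd (S : Set (ℕ ⊕ ℕ)) (I : Interp α) (J : Interp β) :
    IsUniformCover Sᶜ (glue S I J) J Prod.snd I.dom.card where
  map_mem_dom _ hx := (Finset.mem_product.1 hx).2
  card_fiber y hy := by
    simp only [glue, Finset.filter_product_right (· = y), Finset.card_product,
      card_filter_eq_of_mem hy, mul_one]
  mem_conc_iff a ha x hx := by
    simp only [glue, Finset.mem_filter, if_neg ha, and_iff_right_iff_imp]
    exact fun _ => hx
  mem_role_iff r hr x hx y hy := by
    simp only [glue, Finset.mem_filter, if_neg hr, and_iff_right_iff_imp]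
    exact fun _ => Finset.mk_mem_product hx hy

end Interp

theorem exists_satCond_iff_of_subset_of_subset_compl (S : Set (ℕ ⊕ ℕ)) (I J : FInterp) :
    ∃ M : FInterp,
      (∀ κ : Cond, (κ.signature : Set (ℕ ⊕ ℕ)) ⊆ S → (satCond M κ ↔ satCond I κ)) ∧
      (∀ κ : Cond, (κ.signature : Set (ℕ ⊕ ℕ)) ⊆ Sᶜ → (satCond M κ ↔ satCond J κ)) :=
  ⟨(Interp.glue S I J).map Nat.pairEquiv.toEmbedding,
    fun κ hκ => (Interp.satCond_map_iff _ _ κ).trans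
      ((Interp.isUniformCover_glue_fst S I J).satCond_iff hκ),
    fun κ hκ => (Interp.satCond_map_iff _ _ κ).trans
      ((Interp.isUniformCover_glue_snd S I J).satCond_iff hκ)⟩

theorem models_anti {K₁ K₂ : Finset Cond} (h : K₁ ⊆ K₂) : Models K₂ ⊆ Models K₁ :=
  fun _ hI κ hκ => hI κ (h hκ)

theorem entailsL_union_iff_of_disjoint_signature {K₁ K₂ : Finset Cond} {κ : Cond}
    (hK₂ : (Models K₂).Nonempty)
    (hdisj : ∀ κ₁ ∈ insert κ K₁, ∀ κ₂ ∈ K₂, Disjoint κ₁.signature κ₂.signature) :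
    entailsL (K₁ ∪ K₂) κ ↔ entailsL K₁ κ := by
  refine ⟨fun hκ I hI => ?_, fun hκ I hI => hκ I (models_anti Finset.subset_union_left hI)⟩
  obtain ⟨J, hJ⟩ := hK₂
  let S : Finset (ℕ ⊕ ℕ) := (insert κ K₁).biUnion Cond.signature
  have subset_S : ∀ κ₁ ∈ insert κ K₁, (κ₁.signature : Set (ℕ ⊕ ℕ)) ⊆ S := fun κ₁ h₁ =>
    Finset.coe_subset.2 (Finset.subset_biUnion_of_mem Cond.signature h₁)
  have subset_compl_S : ∀ κ₂ ∈ K₂, (κ₂.signature : Set (ℕ ⊕ ℕ)) ⊆ (S : Set (ℕ ⊕ ℕ))ᶜ := by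
    intro κ₂ h₂
    have hS : Disjoint S κ₂.signature :=
      (Finset.disjoint_biUnion_left _ _ _).2 fun κ₁ h₁ => hdisj κ₁ h₁ κ₂ h₂
    exact (Finset.disjoint_coe.2 hS).subset_compl_left
  obtain ⟨M, hMI, hMJ⟩ := exists_satCond_iff_of_subset_of_subset_compl S I J
  have hM : M ∈ Models (K₁ ∪ K₂) := by
    intro κ' hκ'
    rcases Finset.mem_union.1 hκ' with h₁ | h₂
    · exact (hMI κ' (subset_S κ' (Finset.mem_insert_of_mem h₁))).2 (hI κ' h₁)
    · exact (hMJ κ' (subset_compl_S κ' h₂)).2 (hJ κ' h₂)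
  exact (hMI κ (subset_S κ (Finset.mem_insert_self κ K₁))).1 (hκ M hM)

/-- The restriction of `K` to the conditionals connected to `κ`, where connecting chains run through
`K` and `κ`. -/
noncomputable def connectedPart (K : Finset Cond) (κ : Cond) : Finset Cond :=
  K.filter fun κ' =>
    connIn ((↑(K.image fun κ'' => (κ''.C, κ''.D)) : Set (Cpt × Cpt)) ∪ {(κ.C, κ.D)})
      (κ'.C, κ'.D) (κ.C, κ.D)

theorem disjoint_signature_of_mem_sdiff_connectedPart {K : Finset Cond} {κ κ₁ κ₂ : Cond}
    (h₁ : κ₁ ∈ insert κ (connectedPart K κ)) (h₂ : κ₂ ∈ K \ connectedPart K κ) :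
    Disjoint κ₁.signature κ₂.signature := by
  obtain ⟨h₂K, h₂κ⟩ := Finset.mem_sdiff.1 h₂
  by_contra hmeet
  have hdconn : dconn (κ₂.C, κ₂.D) (κ₁.C, κ₁.D) :=
    Finset.not_disjoint_iff_nonempty_inter.1 fun h => hmeet h.symm
  have pair_mem : ∀ κ' ∈ K, (κ'.C, κ'.D) ∈
      (↑(K.image fun κ'' => (κ''.C, κ''.D)) : Set (Cpt × Cpt)) ∪ {(κ.C, κ.D)} :=
    fun κ' hκ' => Or.inl (Finset.mem_coe.2 (Finset.mem_image_of_mem _ hκ'))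
  refine h₂κ (Finset.mem_filter.2 ⟨h₂K, ?_⟩)
  rcases Finset.mem_insert.1 h₁ with rfl | h₁
  · exact .single ⟨hdconn, pair_mem κ₂ h₂K, Or.inr rfl⟩
  · obtain ⟨h₁K, h₁κ⟩ := Finset.mem_filter.1 h₁
    exact .head ⟨hdconn, pair_mem κ₂ h₂K, pair_mem κ₁ h₁K⟩ h₁κ

theorem independence_l_general (K : Finset Cond) (κ : Cond)
    (hK : (Models (K \ connectedPart K κ)).Nonempty) :
    entailsL K κ ↔ entailsL (connectedPart K κ) κ := by
  have hunion : connectedPart K κ ∪ K \ connectedPart K κ = K :=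
    Finset.union_sdiff_of_subset (Finset.filter_subset _ _)
  have key := entailsL_union_iff_of_disjoint_signature hK
    fun _ h₁ _ h₂ => disjoint_signature_of_mem_sdiff_connectedPart h₁ h₂
  rwa [hunion] at key

/-- Independence for l-entailment. -/
theorem independence_l (K : Finset Cond) (hK : (Models K).Nonempty)
    (C D : Cpt) (l u : ℚ) (h0 : 0 ≤ l) (hlu : l ≤ u) (hu : u ≤ 1) :
    entailsL K ⟨C, D, l, u⟩ ↔
      entailsL
        (K.filter fun κ =>
          connIn ((↑(K.image fun κ' => (κ'.C, κ'.D)) : Set (Cpt × Cpt)) ∪ {(C, D)})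
            (κ.C, κ.D) (C, D))
        ⟨C, D, l, u⟩ :=
  independence_l_general K ⟨C, D, l, u⟩ (hK.mono (models_anti Finset.sdiff_subset))
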